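/- arXiv:1909.07864 — 2 statements merged into one kernel-verified Lean document; each statement's English description precedes it below -/
import Mathlib

section
/- Let P be a real symmetric positive definite m×m matrix, let Q be a real symmetric positive semidefinite k×k matrix and G a real symmetric positive semidefinite l×l matrix, and let B_τ be a real k×m matrix and B_c a real l×m matrix, each with trivial kernel (B_τ x = 0 ⟹ x = 0 and B_c x = 0 ⟹ x = 0). Then tr((B_τᵀ Q B_τ + B_cᵀ G B_c) P) ≥ (λ_min(Q) λ_min(B_τᵀ B_τ) + λ_min(G) λ_min(B_cᵀ B_c)) · tr(P), where λ_min(·) denotes the smallest eigenvalue of a real symmetric matrix. -/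
open Matrix

lemma aux_sub_min {n : ℕ} (A : Matrix (Fin n) (Fin n) ℝ) (hA : A.IsHermitian) :
    (A - (⨅ i, hA.eigenvalues i) • (1 : Matrix (Fin n) (Fin n) ℝ)).PosSemidef := by
  set c := ⨅ i, hA.eigenvalues i with hc
  have hU : (hA.eigenvectorUnitary : Matrix (Fin n) (Fin n) ℝ) *
      (hA.eigenvectorUnitary : Matrix (Fin n) (Fin n) ℝ)ᴴ = 1 :=
    Unitary.mul_star_self_of_mem hA.eigenvectorUnitary.2
  have hs := hA.spectral_theorem
  rw [Unitary.conjStarAlgAut_apply] at hs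
  set U := (hA.eigenvectorUnitary : Matrix (Fin n) (Fin n) ℝ)
  have hD : (diagonal (fun i => hA.eigenvalues i - c)).PosSemidef := by
    refine PosSemidef.diagonal fun i => ?_
    have : c ≤ hA.eigenvalues i := ciInf_le (Set.finite_range _).bddBelow i
    simpa using this
  have h := hD.mul_mul_conjTranspose_same U
  have e : diagonal (fun i => hA.eigenvalues i - c) =
      diagonal hA.eigenvalues - c • (1 : Matrix (Fin n) (Fin n) ℝ) := by
    rw [smul_one_eq_diagonal, diagonal_sub]
  rw [e, Matrix.mul_sub, Matrix.sub_mul, Matrix.mul_smul, Matrix.smul_mul, Matrix.mul_one, hU] at h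
  have hs' : A = U * diagonal hA.eigenvalues * Uᴴ := hs
  rwa [← hs'] at h

lemma aux_trace {n : ℕ} {A P : Matrix (Fin n) (Fin n) ℝ} (hA : A.PosSemidef)
    (hP : P.PosSemidef) : 0 ≤ (A * P).trace := by
  obtain ⟨S, rfl⟩ : ∃ S : Matrix (Fin n) (Fin n) ℝ, P = Sᴴ * S := by
    open scoped MatrixOrder in
    exact CStarAlgebra.nonneg_iff_eq_star_mul_self.mp hP.nonneg
  rw [← Matrix.mul_assoc, Matrix.trace_mul_comm, ← Matrix.mul_assoc]
  exact (hA.mul_mul_conjTranspose_same S).trace_nonneg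

lemma aux_bound {m k : ℕ} (P : Matrix (Fin m) (Fin m) ℝ) (Q : Matrix (Fin k) (Fin k) ℝ)
    (B : Matrix (Fin k) (Fin m) ℝ) (hP : P.PosSemidef) (hQ : Q.PosSemidef)
    (hB : (Bᵀ * B).IsHermitian) :
    (⨅ i, hQ.isHermitian.eigenvalues i) * (⨅ i, hB.eigenvalues i) * P.trace ≤
      (Bᵀ * Q * B * P).trace := by
  have hq : 0 ≤ ⨅ i, hQ.isHermitian.eigenvalues i :=
    Real.iInf_nonneg fun i => hQ.eigenvalues_nonneg i
  have h1 := aux_trace ((aux_sub_min Q hQ.isHermitian).conjTranspose_mul_mul_same B) hP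
  have h2 := mul_nonneg hq (aux_trace (aux_sub_min _ hB) hP)
  simp only [conjTranspose_eq_transpose_of_trivial, Matrix.mul_sub, Matrix.sub_mul,
    Matrix.mul_smul, Matrix.smul_mul, Matrix.mul_one, Matrix.one_mul, trace_sub, trace_smul,
    smul_eq_mul] at h1 h2
  linarith


/-- The lower bound of Lemma 3 (fullbound):
`tr((B_τᵀ Q B_τ + B_cᵀ G B_c) P) ≥ (λ_min(Q) λ_min(B_τᵀ B_τ) + λ_min(G) λ_min(B_cᵀ B_c)) tr P`. -/
theorem fullbound_lower {m k l : ℕ} (P : Matrix (Fin m) (Fin m) ℝ)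
    (Q : Matrix (Fin k) (Fin k) ℝ) (G : Matrix (Fin l) (Fin l) ℝ)
    (Bτ : Matrix (Fin k) (Fin m) ℝ) (Bc : Matrix (Fin l) (Fin m) ℝ)
    (hP : P.PosDef) (hQ : Q.PosSemidef) (hG : G.PosSemidef)
    (hBτ : ∀ x : Fin m → ℝ, Bτ.mulVec x = 0 → x = 0)
    (hBc : ∀ x : Fin m → ℝ, Bc.mulVec x = 0 → x = 0)
    (hBτBτ : (Bτᵀ * Bτ).IsHermitian) (hBcBc : (Bcᵀ * Bc).IsHermitian) :
    ((Bτᵀ * Q * Bτ + Bcᵀ * G * Bc) * P).trace ≥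
      ((⨅ i, hQ.isHermitian.eigenvalues i) * (⨅ i, hBτBτ.eigenvalues i) +
        (⨅ i, hG.isHermitian.eigenvalues i) * (⨅ i, hBcBc.eigenvalues i)) * P.trace := by
  have h1 := aux_bound P Q Bτ hP.posSemidef hQ hBτBτ
  have h2 := aux_bound P G Bc hP.posSemidef hG hBcBc
  rw [Matrix.add_mul, trace_add, add_mul]
  exact add_le_add h1 h2
end

section
/- Let G be a simple graph on a finite vertex type V with decidable adjacency that is connected with Fintype.card V = n, let ε : V → ℝ be strictly positive with E = diag(ε), let w : edgeSet G → ℝ be strictly positive edge weights with W = diag(w), let D be the (unoriented) incidence matrix of G indexed by V × edgeSet G, and let σ_ω, σ_v be real numbers. Then (1/2) · tr(σ_ω² • W⁻¹ + σ_v² • (Dᵀ E⁻¹ D)) = (1/2) · (σ_ω² · ∑_{e ∈ edgeSet G} 1 / w e + σ_v² · ∑_{v ∈ V} deg(v) / ε v), where deg(v) is the unweighted degree of v in G. -/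
open Matrix

/-- Lemma 4 (tree graphs): the H₂ performance equals
`(1/2)(σ_ω² ∑_e 1/w_e + σ_v² ∑_v deg(v)/ε_v)`. -/
theorem tree_h2_performance {V : Type*} [Fintype V] [DecidableEq V]
    (G : SimpleGraph V) [DecidableRel G.Adj] (n : ℕ)
    (hconn : G.Connected) (hn : Fintype.card V = n)
    (ε : V → ℝ) (hε : ∀ v, 0 < ε v)
    (w : G.edgeSet → ℝ) (hw : ∀ e, 0 < w e)
    (D : Matrix V G.edgeSet ℝ) (hD : D = Matrix.of fun v (e : G.edgeSet) => G.incMatrix ℝ v e)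
    (σω σv : ℝ) :
    (1 / 2 : ℝ) *
        (σω ^ 2 • (Matrix.diagonal w)⁻¹ + σv ^ 2 • (Dᵀ * (Matrix.diagonal ε)⁻¹ * D)).trace =
      (1 / 2 : ℝ) *
        (σω ^ 2 * ∑ e : G.edgeSet, 1 / w e + σv ^ 2 * ∑ v : V, (G.degree v : ℝ) / ε v) := by
  have hdw : (Matrix.diagonal w)⁻¹ = Matrix.diagonal (fun e => 1 / w e) := by
    apply Matrix.inv_eq_right_inv
    rw [Matrix.diagonal_mul_diagonal, ← Matrix.diagonal_one]
    congr 1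
    funext e
    have := (hw e).ne'
    field_simp
  have hde : (Matrix.diagonal ε)⁻¹ = Matrix.diagonal (fun v => 1 / ε v) := by
    apply Matrix.inv_eq_right_inv
    rw [Matrix.diagonal_mul_diagonal, ← Matrix.diagonal_one]
    congr 1
    funext e
    have := (hε e).ne'
    field_simp
  have hdeg : ∀ v, ∑ e : G.edgeSet, G.incMatrix ℝ v e * G.incMatrix ℝ v e = (G.degree v : ℝ) := by
    intro v
    rw [← G.sum_incMatrix_apply (R := ℝ)]
    have h1 : ∀ e : Sym2 V, G.incMatrix ℝ v e * G.incMatrix ℝ v e = G.incMatrix ℝ v e := by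
      intro e
      by_cases h : e ∈ G.incidenceSet v
      · rw [G.incMatrix_of_mem_incidenceSet h, one_mul]
      · rw [G.incMatrix_of_notMem_incidenceSet h, zero_mul]
    simp only [h1]
    rw [← Finset.sum_subset (Finset.subset_univ G.edgeFinset)]
    · exact (Finset.sum_subtype G.edgeFinset (fun x => by simp) _).symm
    · intro e _ he
      apply G.incMatrix_of_notMem_incidenceSet
      intro h
      exact he (by simpa using h.1)
  have htr : (Dᵀ * (Matrix.diagonal ε)⁻¹ * D).trace = ∑ v : V, (G.degree v : ℝ) / ε v := by
    rw [hde, hD]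
    simp only [Matrix.trace, Matrix.diag_apply, Matrix.mul_apply (M := _ * _),
      Matrix.mul_diagonal, Matrix.transpose_apply, Matrix.of_apply]
    rw [Finset.sum_comm]
    refine Finset.sum_congr rfl fun v _ => ?_
    rw [← hdeg v, Finset.sum_div]
    refine Finset.sum_congr rfl fun e _ => ?_
    ring
  rw [Matrix.trace_add, Matrix.trace_smul, Matrix.trace_smul, htr, hdw, Matrix.trace_diagonal]
  simp only [smul_eq_mul]
end
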